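/- arXiv:1907.03629 — 4 statements merged into one kernel-verified Lean document; each statement's English description precedes it below -/
import Mathlib

section
/- Let V and W be real Banach spaces, T > 0, and let β, γ, ρ ∈ (0,1] satisfy β + γρ > 1. Let A : [0,T] × V → W satisfy ‖A‖_{β,γ} < ∞ and let Y : [0,T] → V satisfy ‖Y‖_{C^ρ} < ∞. Then for every 0 ≤ s ≤ t ≤ T there exists an element I(s,t) of W such that for every sequence of partitions of [s,t] whose mesh tends to 0, the associated Riemann sums Σ_{[u,v]∈Π} δA_{u,v}(Y_u) converge in W to I(s,t); in particular the limit exists and is independent of the sequence of partitions. (This limit is called the nonlinear Young integral ∫_s^t A_{dr}(Y_r).) -/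
open Filter Topology

/-- A partition of the interval `[s,t]`: a finite strictly increasing sequence
`s = r 0 < r 1 < … < r n = t` (for `n = 0` this is the trivial partition of `[s,s]`). -/
structure YoungPartition (s t : ℝ) where
  n : ℕ
  r : ℕ → ℝ
  strict : ∀ i, i < n → r i < r (i + 1)
  first : r 0 = s
  last : r n = t

/-- The mesh of a partition: the largest step `r (i+1) - r i`. -/
noncomputable def YoungPartition.mesh {s t : ℝ} (P : YoungPartition s t) : ℝ :=
  (((Finset.range P.n).sup fun i => (P.r (i + 1) - P.r i).toNNReal : NNReal) : ℝ)

/-- The Riemann sum `Σ_i δA_{r i, r (i+1)} (Y (r i))` associated to a partition,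
where `δA_{u,v}(x) = A v x - A u x`. -/
noncomputable def youngRiemannSum {E F : Type*} [NormedAddCommGroup E] [NormedAddCommGroup F]
    (A : ℝ → E → F) (Y : ℝ → E) {s t : ℝ} (P : YoungPartition s t) : F :=
  ∑ i ∈ Finset.range P.n, (A (P.r (i + 1)) (Y (P.r i)) - A (P.r i) (Y (P.r i)))


/-- Clamp of `x` to `[u,v]`. -/
noncomputable def ycl (u v x : ℝ) : ℝ := max u (min v x)

/-- Dyadic points of `[s,t]`. -/
noncomputable def ydy (s t : ℝ) (k i : ℕ) : ℝ := s + (t - s) * ((i : ℝ) / 2 ^ k)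

/-- Dyadic Riemann sums clamped to `[u,v]`. -/
noncomputable def yG {F : Type*} [NormedAddCommGroup F] (X : ℝ → ℝ → F) (s t : ℝ) (k : ℕ)
    (u v : ℝ) : F :=
  ∑ i ∈ Finset.range (2 ^ k), X (ycl u v (ydy s t k i)) (ycl u v (ydy s t k (i + 1)))

lemma ycl_mono (u v : ℝ) : Monotone (ycl u v) := fun a b h => by
  unfold ycl; gcongr

lemma ycl_ge (u v x : ℝ) : u ≤ ycl u v x := le_max_left _ _

lemma ycl_le {u v : ℝ} (h : u ≤ v) (x : ℝ) : ycl u v x ≤ v := max_le h (min_le_left _ _)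

lemma ycl_lip (u v : ℝ) {a b : ℝ} (h : a ≤ b) : ycl u v b - ycl u v a ≤ b - a := by
  unfold ycl
  rcases le_total v a with h1 | h1 <;> rcases le_total v b with h2 | h2 <;>
  simp only [h1, h2, min_eq_left, min_eq_right] <;>
  rcases max_cases u a with h3 | h3 <;> rcases max_cases u b with h4 | h4 <;>
  rcases max_cases u v with h5 | h5 <;> linarith

lemma ydy_zero (s t : ℝ) (k : ℕ) : ydy s t k 0 = s := by simp [ydy]

lemma ydy_last (s t : ℝ) (k : ℕ) : ydy s t k (2 ^ k) = t := by simp [ydy]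

lemma ydy_step (s t : ℝ) (k i : ℕ) : ydy s t k (i + 1) - ydy s t k i = (t - s) / 2 ^ k := by
  simp only [ydy]; push_cast; ring

lemma ydy_mono {s t : ℝ} (h : s ≤ t) (k i : ℕ) : ydy s t k i ≤ ydy s t k (i + 1) := by
  have := ydy_step s t k i
  have h2 : 0 ≤ (t - s) / 2 ^ k := div_nonneg (by linarith) (by positivity)
  linarith

lemma ydy_double (s t : ℝ) (k i : ℕ) : ydy s t (k + 1) (2 * i) = ydy s t k i := by
  simp only [ydy]; push_cast; rw [pow_succ]; field_simp

lemma sum_range_double {F : Type*} [AddCommMonoid F] (f : ℕ → F) (n : ℕ) :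
    ∑ i ∈ Finset.range (2 * n), f i = ∑ i ∈ Finset.range n, (f (2 * i) + f (2 * i + 1)) := by
  induction n with
  | zero => simp
  | succ n ih =>
    rw [Finset.sum_range_succ, ← ih, show 2 * (n + 1) = 2 * n + 1 + 1 by ring,
      Finset.sum_range_succ, Finset.sum_range_succ, add_assoc]

section sewing
variable {F : Type*} [NormedAddCommGroup F] (X : ℝ → ℝ → F) {s t C η : ℝ}

lemma yG_step (hst : s ≤ t) (hC : 0 ≤ C) (hη : 0 < η)
    (hd : ∀ u w v, s ≤ u → u ≤ w → w ≤ v → v ≤ t →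
      ‖X u v - X u w - X w v‖ ≤ C * ((v - u) * ((v - u) ^ η * (v - u) ^ η)))
    {u v : ℝ} (hu : s ≤ u) (huv : u ≤ v) (hv : v ≤ t) (k : ℕ) :
    ‖yG X s t k u v - yG X s t (k + 1) u v‖ ≤
      C * ((v - u) * (v - u) ^ η) * ((t - s) / 2 ^ k) ^ η := by
  unfold yG
  rw [show 2 ^ (k + 1) = 2 * 2 ^ k by ring, sum_range_double, ← Finset.sum_sub_distrib]
  have key : ∀ i ∈ Finset.range (2 ^ k),
      ‖X (ycl u v (ydy s t k i)) (ycl u v (ydy s t k (i + 1))) -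
        (X (ycl u v (ydy s t (k + 1) (2 * i))) (ycl u v (ydy s t (k + 1) (2 * i + 1))) +
        X (ycl u v (ydy s t (k + 1) (2 * i + 1))) (ycl u v (ydy s t (k + 1) (2 * i + 1 + 1))))‖
      ≤ C * ((v - u) ^ η * ((t - s) / 2 ^ k) ^ η) *
        (ycl u v (ydy s t k (i + 1)) - ycl u v (ydy s t k i)) := by
    intro i _
    rw [show 2 * i + 1 + 1 = 2 * (i + 1) by ring, ydy_double, ydy_double]
    have h1 := ydy_mono hst (k + 1) (2 * i)
    have h2 := ydy_mono hst (k + 1) (2 * i + 1)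
    rw [ydy_double] at h1
    rw [show 2 * i + 1 + 1 = 2 * (i + 1) by ring, ydy_double] at h2
    have a1 := ycl_mono u v h1
    have a2 := ycl_mono u v h2
    have a3 := ycl_ge u v (ydy s t k i)
    have a4 := ycl_le huv (ydy s t k (i + 1))
    have a5 := ycl_lip u v (h1.trans h2)
    rw [ydy_step] at a5
    have := hd _ _ _ (hu.trans a3) a1 a2 (a4.trans hv)
    rw [sub_sub] at this
    refine this.trans ?_
    have a0 : 0 ≤ ycl u v (ydy s t k (i + 1)) - ycl u v (ydy s t k i) := by linarith
    have b1 : (ycl u v (ydy s t k (i + 1)) - ycl u v (ydy s t k i)) ^ η ≤ (v - u) ^ η :=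
      Real.rpow_le_rpow a0 (by linarith) hη.le
    have b2 : (ycl u v (ydy s t k (i + 1)) - ycl u v (ydy s t k i)) ^ η
        ≤ ((t - s) / 2 ^ k) ^ η :=
      Real.rpow_le_rpow a0 (by linarith) hη.le
    have b0 := Real.rpow_nonneg a0 η
    have := mul_le_mul b1 b2 b0 (b0.trans b1)
    calc _ ≤ C * ((ycl u v (ydy s t k (i + 1)) - ycl u v (ydy s t k i)) *
        ((v - u) ^ η * ((t - s) / 2 ^ k) ^ η)) := by gcongr
      _ = _ := by ring
  refine (norm_sum_le_of_le _ key).trans (le_of_eq ?_)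
  rw [← Finset.mul_sum, Finset.sum_range_sub (fun i => ycl u v (ydy s t k i)), ydy_last, ydy_zero]
  have e1 : ycl u v t = v := by simp [ycl, hv, huv]
  have e2 : ycl u v s = u := by simp [ycl, hu]
  rw [e1, e2]; ring

lemma yG_zero {u v : ℝ} (hu : s ≤ u) (huv : u ≤ v) (hv : v ≤ t) : yG X s t 0 u v = X u v := by
  have e1 : ycl u v t = v := by simp [ycl, hv, huv]
  have e2 : ycl u v s = u := by simp [ycl, hu]
  have h1 := ydy_last s t 0
  have h0 := ydy_zero s t 0
  simp only [pow_zero] at h1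
  simp [yG, h0, h1, e1, e2]

lemma yG_add (h0 : ∀ u, X u u = 0) (hst : s ≤ t) (hC : 0 ≤ C) (hη : 0 < η)
    (hd : ∀ u w v, s ≤ u → u ≤ w → w ≤ v → v ≤ t →
      ‖X u v - X u w - X w v‖ ≤ C * ((v - u) * ((v - u) ^ η * (v - u) ^ η)))
    {u v w : ℝ} (hu : s ≤ u) (huw : u ≤ w) (hwv : w ≤ v) (hv : v ≤ t) (k : ℕ) :
    ‖yG X s t k u v - yG X s t k u w - yG X s t k w v‖ ≤
      C * (t - s) * (((t - s) / 2 ^ k) ^ η * ((t - s) / 2 ^ k) ^ η) := by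
  unfold yG
  rw [← Finset.sum_sub_distrib, ← Finset.sum_sub_distrib]
  have hh : 0 ≤ (t - s) / 2 ^ k := div_nonneg (by linarith) (by positivity)
  have key : ∀ i ∈ Finset.range (2 ^ k),
      ‖X (ycl u v (ydy s t k i)) (ycl u v (ydy s t k (i + 1))) -
        X (ycl u w (ydy s t k i)) (ycl u w (ydy s t k (i + 1))) -
        X (ycl w v (ydy s t k i)) (ycl w v (ydy s t k (i + 1)))‖
      ≤ C * ((t - s) / 2 ^ k * (((t - s) / 2 ^ k) ^ η * ((t - s) / 2 ^ k) ^ η)) := by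
    intro i _
    have hab := ydy_mono hst k i
    have hs := ydy_step s t k i
    generalize ydy s t k i = a at *
    generalize ydy s t k (i + 1) = b at *
    have hR : 0 ≤ C * ((t - s) / 2 ^ k * (((t - s) / 2 ^ k) ^ η * ((t - s) / 2 ^ k) ^ η)) := by
      positivity
    have lo : ∀ x, x ≤ w → ycl u v x = ycl u w x ∧ ycl w v x = w := by
      intro x hx
      simp [ycl, hx, hx.trans hwv]
    have hi : ∀ x, w ≤ x → ycl u v x = ycl w v x ∧ ycl u w x = w := by
      intro x hx
      have : w ≤ min v x := le_min hwv hx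
      simp [ycl, hx, huw, this, huw.trans this]
    rcases le_total b w with hb | hb
    · rw [(lo b hb).1, (lo b hb).2, (lo a (hab.trans hb)).1, (lo a (hab.trans hb)).2, h0]
      simpa using hR
    rcases le_total w a with ha | ha
    · rw [(hi b hb).1, (hi b hb).2, (hi a ha).1, (hi a ha).2, h0]
      simpa using hR
    · have a5 := ycl_lip u v hab
      have a0 : 0 ≤ ycl u v b - ycl u v a := sub_nonneg.2 (ycl_mono u v hab)
      have a1 : ycl u v a ≤ w := by rw [(lo a ha).1]; exact ycl_le huw a
      have a2 : w ≤ ycl u v b := by rw [(hi b hb).1]; exact ycl_ge _ _ _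
      rw [hs] at a5
      rw [← (lo a ha).1, (lo a ha).2, ← (hi b hb).1, (hi b hb).2]
      refine (hd _ _ _ (hu.trans (ycl_ge u v a)) a1 a2 ((ycl_le (huw.trans hwv) b).trans hv)).trans ?_
      gcongr
  refine (norm_sum_le_of_le _ key).trans (le_of_eq ?_)
  rw [Finset.sum_const, Finset.card_range, nsmul_eq_mul]
  push_cast
  generalize ((t - s) / 2 ^ k) ^ η = z
  field_simp

lemma ysew [CompleteSpace F] (h0 : ∀ u, X u u = 0) (hst : s ≤ t) (hC : 0 ≤ C) (hη : 0 < η)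
    (hd : ∀ u w v, s ≤ u → u ≤ w → w ≤ v → v ≤ t →
      ‖X u v - X u w - X w v‖ ≤ C * ((v - u) * ((v - u) ^ η * (v - u) ^ η))) :
    ∃ (f : ℝ → F) (K : ℝ), 0 ≤ K ∧ ∀ u v, s ≤ u → u ≤ v → v ≤ t →
      ‖f v - f u - X u v‖ ≤ K * ((v - u) * (v - u) ^ η) := by
  set q : ℝ := (1 / 2) ^ η with hq
  have hq0 : 0 ≤ q := by positivity
  have hq1 : q < 1 := Real.rpow_lt_one (by norm_num) (by norm_num) hη
  have hts : 0 ≤ t - s := by linarith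
  have hpow : ∀ k : ℕ, ((t - s) / 2 ^ k) ^ η = (t - s) ^ η * q ^ k := by
    intro k
    rw [div_eq_mul_one_div, Real.mul_rpow hts (by positivity), ← one_div_pow, hq,
      ← Real.rpow_natCast, ← Real.rpow_natCast, ← Real.rpow_mul (by norm_num),
      ← Real.rpow_mul (by norm_num), mul_comm η]
  have hstep : ∀ u v, s ≤ u → u ≤ v → v ≤ t → ∀ k,
      dist (yG X s t k u v) (yG X s t (k + 1) u v) ≤
        C * ((v - u) * (v - u) ^ η) * (t - s) ^ η * q ^ k := by
    intro u v hu huv hv k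
    rw [dist_eq_norm]
    refine (yG_step X hst hC hη hd hu huv hv k).trans (le_of_eq ?_)
    rw [hpow]; ring
  have hlim : ∀ u v, ∃ g, s ≤ u → u ≤ v → v ≤ t → Tendsto (fun k => yG X s t k u v) atTop (𝓝 g) := by
    intro u v
    by_cases h : s ≤ u ∧ u ≤ v ∧ v ≤ t
    · obtain ⟨g, hg⟩ := cauchySeq_tendsto_of_complete
        (cauchySeq_of_le_geometric q _ hq1 (hstep u v h.1 h.2.1 h.2.2))
      exact ⟨g, fun _ _ _ => hg⟩
    · exact ⟨0, fun a b c => absurd ⟨a, b, c⟩ h⟩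
  choose g hg using hlim
  refine ⟨g s, C * (t - s) ^ η / (1 - q), ?_, ?_⟩
  · have : 0 < 1 - q := by linarith
    positivity
  intro u v hu huv hv
  have e : g s v - g s u = g u v := by
    have l1 := ((hg s v le_rfl (hu.trans huv) hv).sub (hg s u le_rfl hu (huv.trans hv))).sub
      (hg u v hu huv hv)
    have l2 : Tendsto (fun k => yG X s t k s v - yG X s t k s u - yG X s t k u v) atTop (𝓝 0) := by
      refine squeeze_zero_norm (fun k => yG_add X h0 hst hC hη hd le_rfl hu huv hv k) ?_
      simp only [hpow]
      have hqk := (tendsto_pow_atTop_nhds_zero_of_lt_one hq0 hq1).const_mul ((t - s) ^ η)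
      simpa using (hqk.mul hqk).const_mul (C * (t - s))
    exact sub_eq_zero.1 (tendsto_nhds_unique l1 l2)
  rw [e, ← yG_zero X hu huv hv, ← dist_eq_norm, dist_comm]
  refine (dist_le_of_le_geometric_of_tendsto₀ q _ hq1 (hstep u v hu huv hv)
    (hg u v hu huv hv)).trans (le_of_eq ?_)
  ring

end sewing

/-- **Existence of the nonlinear Young integral.**  If `‖A‖_{β,γ} ≤ KA` and
`‖Y‖_{C^ρ} ≤ KY` on `[0,T]` with `β + γρ > 1`, then for every `0 ≤ s ≤ t ≤ T` the Riemann sums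
`Σ δA_{u,v}(Y_u)` converge, along any sequence of partitions of `[s,t]` whose mesh tends to `0`,
to a common limit `I(s,t) = ∫_s^t A_{dr}(Y_r)` independent of the chosen sequence. -/
theorem nonlinearYoungIntegral_exists
    {E F : Type*} [NormedAddCommGroup E] [NormedSpace ℝ E] [CompleteSpace E]
    [NormedAddCommGroup F] [NormedSpace ℝ F] [CompleteSpace F]
    (T : ℝ) (hT : 0 < T) (β γ ρ : ℝ)
    (hβ : β ∈ Set.Ioc (0 : ℝ) 1) (hγ : γ ∈ Set.Ioc (0 : ℝ) 1) (hρ : ρ ∈ Set.Ioc (0 : ℝ) 1)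
    (hβγρ : 1 < β + γ * ρ)
    (A : ℝ → E → F) (Y : ℝ → E) (KA KY : ℝ)
    (hA : ∀ s ∈ Set.Icc (0 : ℝ) T, ∀ t ∈ Set.Icc (0 : ℝ) T, ∀ x y : E,
      ‖(A t x - A s x) - (A t y - A s y)‖ ≤ KA * |t - s| ^ β * ‖x - y‖ ^ γ)
    (hY : ∀ s ∈ Set.Icc (0 : ℝ) T, ∀ t ∈ Set.Icc (0 : ℝ) T, ‖Y t - Y s‖ ≤ KY * |t - s| ^ ρ)
    (s t : ℝ) (hs : 0 ≤ s) (hst : s ≤ t) (ht : t ≤ T) :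
    ∃ I : F, ∀ P : ℕ → YoungPartition s t,
      Tendsto (fun k => (P k).mesh) atTop (𝓝 0) →
      Tendsto (fun k => youngRiemannSum A Y (P k)) atTop (𝓝 I) := by
  have hγ0 := hγ.1
  have hβ0 := hβ.1
  set η := (β + γ * ρ - 1) / 2 with hηd
  have hη : 0 < η := by rw [hηd]; linarith
  obtain ⟨f, K, hK, hf⟩ := ysew (fun u v => A v (Y u) - A u (Y u)) (s := s) (t := t)
    (C := |KA| * |KY| ^ γ) (η := η) (by simp) hst (by positivity) hη (by
      intro u w v hu huw hwv hv
      have mu : u ∈ Set.Icc 0 T := ⟨by linarith, by linarith⟩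
      have mw : w ∈ Set.Icc 0 T := ⟨by linarith, by linarith⟩
      have mv : v ∈ Set.Icc 0 T := ⟨by linarith, by linarith⟩
      have h0 : 0 ≤ v - u := by linarith
      have h1 := hA w mw v mv (Y u) (Y w)
      have h2 : ‖Y u - Y w‖ ≤ |KY| * (v - u) ^ ρ := by
        refine (hY w mw u mu).trans ?_
        refine mul_le_mul (le_abs_self _) ?_ (by positivity) (by positivity)
        exact Real.rpow_le_rpow (abs_nonneg _) (by rw [abs_le]; constructor <;> linarith) hρ.1.le
      have h3 : |v - w| ^ β ≤ (v - u) ^ β :=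
        Real.rpow_le_rpow (abs_nonneg _) (by rw [abs_le]; constructor <;> linarith) hβ0.le
      have h4 : ‖Y u - Y w‖ ^ γ ≤ (|KY| * (v - u) ^ ρ) ^ γ :=
        Real.rpow_le_rpow (norm_nonneg _) h2 hγ0.le
      have e : A v (Y u) - A u (Y u) - (A w (Y u) - A u (Y u)) - (A v (Y w) - A w (Y w)) =
        A v (Y u) - A w (Y u) - (A v (Y w) - A w (Y w)) := by abel
      have e2 : (v - u) * ((v - u) ^ η * (v - u) ^ η) = (v - u) ^ β * (v - u) ^ (ρ * γ) := by
        rw [← Real.rpow_add' h0 (by linarith), ← Real.rpow_add' h0 (by linarith)]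
        nth_rewrite 1 [← Real.rpow_one (v - u)]
        rw [← Real.rpow_add' h0 (by linarith)]
        congr 1
        rw [hηd]; ring
      simp only [e]
      refine h1.trans ?_
      calc KA * |v - w| ^ β * ‖Y u - Y w‖ ^ γ
          ≤ |KA| * (v - u) ^ β * (|KY| * (v - u) ^ ρ) ^ γ := by
            gcongr
            exact le_abs_self _
        _ = _ := by
            rw [Real.mul_rpow (abs_nonneg _) (by positivity), ← Real.rpow_mul h0, e2]; ring)
  refine ⟨f t - f s, fun P hP => ?_⟩
  have main : ∀ Q : YoungPartition s t,
      ‖youngRiemannSum A Y Q - (f t - f s)‖ ≤ K * (t - s) * Q.mesh ^ η := by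
    intro Q
    have hmono : ∀ j ≤ Q.n, ∀ i ≤ j, Q.r i ≤ Q.r j := by
      intro j
      induction j with
      | zero => intro _ i hi; rw [Nat.le_zero.1 hi]
      | succ j ih =>
        intro hj i hi
        rcases Nat.lt_or_ge j i with h | h
        · rw [show i = j + 1 by omega]
        · exact (ih (by omega) i h).trans (Q.strict j (by omega)).le
    have hmesh : ∀ i < Q.n, Q.r (i + 1) - Q.r i ≤ Q.mesh := by
      intro i hi
      refine (Real.le_coe_toNNReal _).trans ?_
      unfold YoungPartition.mesh
      exact_mod_cast Finset.le_sup (f := fun i => (Q.r (i + 1) - Q.r i).toNNReal)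
        (Finset.mem_range.2 hi)
    have tel : f t - f s = ∑ i ∈ Finset.range Q.n, (f (Q.r (i + 1)) - f (Q.r i)) := by
      rw [Finset.sum_range_sub (fun i => f (Q.r i)), Q.first, Q.last]
    have tel2 : t - s = ∑ i ∈ Finset.range Q.n, (Q.r (i + 1) - Q.r i) := by
      rw [Finset.sum_range_sub, Q.first, Q.last]
    rw [norm_sub_rev, tel, youngRiemannSum, ← Finset.sum_sub_distrib, mul_assoc, mul_comm (t - s),
      ← mul_assoc, tel2, Finset.mul_sum]
    refine norm_sum_le_of_le _ fun i hi => ?_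
    have hi' := Finset.mem_range.1 hi
    have hlt := (Q.strict i hi').le
    have b1 := hmono i hi'.le 0 (Nat.zero_le _)
    have b2 := hmono Q.n le_rfl (i + 1) hi'
    rw [Q.first] at b1
    rw [Q.last] at b2
    refine (hf _ _ b1 hlt b2).trans ?_
    have c0 : 0 ≤ Q.r (i + 1) - Q.r i := by linarith
    have := Real.rpow_le_rpow c0 (hmesh i hi') hη.le
    calc _ ≤ K * ((Q.r (i + 1) - Q.r i) * Q.mesh ^ η) := by gcongr
      _ = _ := by ring
  rw [tendsto_iff_norm_sub_tendsto_zero]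
  refine squeeze_zero (fun _ => norm_nonneg _) (fun k => main (P k)) ?_
  have := (hP.rpow_const (p := η) (Or.inr hη.le)).const_mul (K * (t - s))
  simpa [Real.zero_rpow hη.ne'] using this
end

section
/- Let V and W be real Banach spaces, T > 0, and let β, γ, ρ ∈ (0,1] satisfy β + γρ > 1. Let A : [0,T] × V → W satisfy ‖A‖_{β,γ} < ∞ and let Y : [0,T] → V satisfy ‖Y‖_{C^ρ} < ∞. Let I(s,t) ∈ W denote the limit of the Riemann sums Σ_{[u,v]∈Π} δA_{u,v}(Y_u) over partitions Π of [s,t] as the mesh tends to 0. Then there is a constant C, depending only on β, γ and ρ, such that for all 0 ≤ s ≤ t ≤ T one has ‖I(s,t) − δA_{s,t}(Y_s)‖_W ≤ C · ‖A‖_{β,γ} · ‖Y‖_{C^ρ}^γ · (t−s)^{β+γρ}. -/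
open Filter Topology

theorem young_sum_even_odd {F : Type*} [AddCommGroup F] (f : ℕ → F) (n : ℕ) :
    ∑ i ∈ Finset.range (2 * n), f i = ∑ i ∈ Finset.range n, (f (2 * i) + f (2 * i + 1)) := by
  induction n with
  | zero => simp
  | succ k ih =>
    rw [show 2 * (k + 1) = 2 * k + 1 + 1 by ring, Finset.sum_range_succ, Finset.sum_range_succ,
      Finset.sum_range_succ, ih]
    abel

/-- The dyadic partition of `[s,t]`. -/
noncomputable def youngDyadic (s t : ℝ) (h : s < t) (k : ℕ) : YoungPartition s t where
  n := 2 ^ k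
  r := fun i => s + i * ((t - s) / 2 ^ k)
  strict := by
    intro i _
    have : 0 < (t - s) / 2 ^ k := div_pos (sub_pos.2 h) (by positivity)
    push_cast
    linarith
  first := by simp
  last := by
    push_cast
    field_simp
    ring

theorem youngDyadic_mesh (s t : ℝ) (h : s < t) :
    Tendsto (fun k => (youngDyadic s t h k).mesh) atTop (𝓝 0) := by
  have h1 : Tendsto (fun k : ℕ => (t - s) * (1 / 2 : ℝ) ^ k) atTop (𝓝 0) := by
    simpa using (tendsto_pow_atTop_nhds_zero_of_lt_one (by norm_num : (0 : ℝ) ≤ 1 / 2)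
      (by norm_num)).const_mul (t - s)
  refine squeeze_zero (fun k => NNReal.coe_nonneg _) (fun k => ?_) h1
  have h0 : 0 ≤ (t - s) * (1 / 2 : ℝ) ^ k := mul_nonneg (sub_pos.2 h).le (by positivity)
  unfold YoungPartition.mesh
  rw [← Real.le_toNNReal_iff_coe_le h0]
  refine Finset.sup_le fun i _ => ?_
  refine Real.toNNReal_le_toNNReal (le_of_eq ?_)
  simp only [youngDyadic]
  push_cast
  rw [one_div, inv_pow]
  ring

theorem young_step {E F : Type*} [NormedAddCommGroup E] [NormedAddCommGroup F]
    (β γ ρ : ℝ) (hγ : 0 < γ) (T : ℝ)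
    (A : ℝ → E → F) (Y : ℝ → E) (KA KY : ℝ) (hKA : 0 ≤ KA) (hKY : 0 ≤ KY)
    (hA : ∀ s ∈ Set.Icc (0 : ℝ) T, ∀ t ∈ Set.Icc (0 : ℝ) T, ∀ x y : E,
        ‖(A t x - A s x) - (A t y - A s y)‖ ≤ KA * |t - s| ^ β * ‖x - y‖ ^ γ)
    (hY : ∀ s ∈ Set.Icc (0 : ℝ) T, ∀ t ∈ Set.Icc (0 : ℝ) T, ‖Y t - Y s‖ ≤ KY * |t - s| ^ ρ)
    (u h : ℝ) (hh : 0 < h) (hu : 0 ≤ u) (hv : u + 2 * h ≤ T) :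
    ‖(A (u + 2 * h) (Y u) - A u (Y u)) - ((A (u + h) (Y u) - A u (Y u)) +
      (A (u + 2 * h) (Y (u + h)) - A (u + h) (Y (u + h))))‖ ≤
      KA * KY ^ γ * h ^ (β + γ * ρ) := by
  have mu : u ∈ Set.Icc (0 : ℝ) T := ⟨hu, by linarith⟩
  have mm : u + h ∈ Set.Icc (0 : ℝ) T := ⟨by linarith, by linarith⟩
  have mv : u + 2 * h ∈ Set.Icc (0 : ℝ) T := ⟨by linarith, hv⟩
  have a1 := hA _ mm _ mv (Y u) (Y (u + h))
  have a2 := hY _ mm _ mu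
  rw [show u + 2 * h - (u + h) = h by ring, abs_of_pos hh] at a1
  rw [show u - (u + h) = -h by ring, abs_neg, abs_of_pos hh] at a2
  have a3 : ‖Y u - Y (u + h)‖ ^ γ ≤ KY ^ γ * h ^ (γ * ρ) := by
    refine (Real.rpow_le_rpow (norm_nonneg _) a2 hγ.le).trans (le_of_eq ?_)
    rw [Real.mul_rpow hKY (Real.rpow_nonneg hh.le _), ← Real.rpow_mul hh.le, mul_comm ρ γ]
  calc _ = ‖(A (u + 2 * h) (Y u) - A (u + h) (Y u)) -
        (A (u + 2 * h) (Y (u + h)) - A (u + h) (Y (u + h)))‖ := by congr 1; abel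
    _ ≤ _ := a1
    _ ≤ KA * h ^ β * (KY ^ γ * h ^ (γ * ρ)) := by gcongr
    _ = _ := by rw [Real.rpow_add hh]; ring

/-- **Sewing bound for the nonlinear Young integral.**  There is a constant `C`, depending only
on `β`, `γ`, `ρ` (and the ambient spaces), such that whenever `‖A‖_{β,γ} ≤ KA`,
`‖Y‖_{C^ρ} ≤ KY` on `[0,T]`, and `I s t` denotes the limit of the Riemann sums over partitions
of `[s,t]` as the mesh tends to `0`, one has
`‖I(s,t) − δA_{s,t}(Y_s)‖ ≤ C · KA · KY^γ · (t−s)^{β+γρ}` for all `0 ≤ s ≤ t ≤ T`. -/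
theorem nonlinearYoungIntegral_bound
    {E F : Type*} [NormedAddCommGroup E] [NormedSpace ℝ E] [CompleteSpace E]
    [NormedAddCommGroup F] [NormedSpace ℝ F] [CompleteSpace F]
    (β γ ρ : ℝ)
    (hβ : β ∈ Set.Ioc (0 : ℝ) 1) (hγ : γ ∈ Set.Ioc (0 : ℝ) 1) (hρ : ρ ∈ Set.Ioc (0 : ℝ) 1)
    (hβγρ : 1 < β + γ * ρ) :
    ∃ C : ℝ, ∀ T : ℝ, 0 < T →
      ∀ (A : ℝ → E → F) (Y : ℝ → E) (KA KY : ℝ), 0 ≤ KA → 0 ≤ KY →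
      (∀ s ∈ Set.Icc (0 : ℝ) T, ∀ t ∈ Set.Icc (0 : ℝ) T, ∀ x y : E,
        ‖(A t x - A s x) - (A t y - A s y)‖ ≤ KA * |t - s| ^ β * ‖x - y‖ ^ γ) →
      (∀ s ∈ Set.Icc (0 : ℝ) T, ∀ t ∈ Set.Icc (0 : ℝ) T, ‖Y t - Y s‖ ≤ KY * |t - s| ^ ρ) →
      ∀ I : ℝ → ℝ → F,
      (∀ s t : ℝ, 0 ≤ s → s ≤ t → t ≤ T → ∀ P : ℕ → YoungPartition s t,
        Tendsto (fun k => (P k).mesh) atTop (𝓝 0) →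
        Tendsto (fun k => youngRiemannSum A Y (P k)) atTop (𝓝 (I s t))) →
      ∀ s t : ℝ, 0 ≤ s → s ≤ t → t ≤ T →
        ‖I s t - (A t (Y s) - A s (Y s))‖ ≤ C * KA * KY ^ γ * (t - s) ^ (β + γ * ρ) := by
  set θ := β + γ * ρ with hθ
  set q : ℝ := 2 ^ (1 - θ) with hq
  have hq1 : q < 1 := Real.rpow_lt_one_of_one_lt_of_neg (by norm_num) (by linarith)
  refine ⟨2 ^ (-θ) / (1 - q), ?_⟩
  intro T hT A Y KA KY hKA hKY hA hY I hI s t hs hst ht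
  rcases hst.eq_or_lt with rfl | hlt
  · let P : YoungPartition s s := ⟨0, fun _ => s, by simp, rfl, rfl⟩
    have h1 := hI s s hs le_rfl ht (fun _ => P) (by simp [P, YoungPartition.mesh])
    have h2 : youngRiemannSum A Y P = 0 := by simp [P, youngRiemannSum]
    rw [h2] at h1
    have h3 : I s s = 0 := tendsto_nhds_unique h1 tendsto_const_nhds
    rw [h3]
    simp [Real.zero_rpow (show θ ≠ 0 by linarith)]
  · have hL : 0 < t - s := sub_pos.2 hlt
    have h1 := hI s t hs hst ht (youngDyadic s t hlt) (youngDyadic_mesh s t hlt)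
    have key : ∀ k, dist (youngRiemannSum A Y (youngDyadic s t hlt k))
        (youngRiemannSum A Y (youngDyadic s t hlt (k + 1))) ≤
        (2 ^ (-θ) * KA * KY ^ γ * (t - s) ^ θ) * q ^ k := by
      intro k
      set h : ℝ := (t - s) / 2 ^ (k + 1) with hh
      have hpos : 0 < h := by positivity
      have h2 : (t - s) / 2 ^ k = 2 * h := by rw [hh, pow_succ]; field_simp
      have hN : t = s + 2 ^ k * (2 * h) := by rw [← h2]; field_simp; ring
      rw [dist_eq_norm]
      simp only [youngRiemannSum, youngDyadic]
      rw [pow_succ' 2 k, young_sum_even_odd, ← Finset.sum_sub_distrib]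
      have hb : ∀ i ∈ Finset.range (2 ^ k), _ ≤ KA * KY ^ γ * h ^ θ := fun i hi =>
        young_step β γ ρ hγ.1 T A Y KA KY hKA hKY hA hY (s + i * (2 * h)) h hpos
          (by positivity) (by
            have : (i : ℝ) + 1 ≤ 2 ^ k := by exact_mod_cast Finset.mem_range.1 hi
            nlinarith)
      have hsum := (norm_sum_le _ _).trans (Finset.sum_le_card_nsmul _ _ _ hb)
      have hfin : (Finset.range (2 ^ k)).card • (KA * KY ^ γ * h ^ θ) =
          (2 ^ (-θ) * KA * KY ^ γ * (t - s) ^ θ) * q ^ k := by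
        rw [Finset.card_range, nsmul_eq_mul, hh, Real.div_rpow hL.le (by positivity), hq,
          ← Real.rpow_natCast ((2 : ℝ) ^ (1 - θ)) k, ← Real.rpow_mul (by norm_num),
          ← Real.rpow_natCast 2 (k + 1), ← Real.rpow_mul (by norm_num), div_eq_mul_inv,
          ← Real.rpow_neg (by norm_num)]
        push_cast
        rw [← Real.rpow_natCast 2 k]
        have e : (2 : ℝ) ^ (k : ℝ) * 2 ^ (-((k + 1 : ℝ) * θ)) = 2 ^ (-θ) * 2 ^ ((1 - θ) * k) := by
          rw [← Real.rpow_add (by norm_num), ← Real.rpow_add (by norm_num)]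
          congr 1
          ring
        linear_combination (KA * KY ^ γ * (t - s) ^ θ) * e
      rw [← hfin]
      refine le_trans (le_of_eq ?_) hsum
      congr 1
      refine Finset.sum_congr rfl fun i _ => ?_
      have e0 : s + (i : ℝ) * ((t - s) / 2 ^ k) = s + i * (2 * h) := by rw [h2]
      have e1 : s + ((i + 1 : ℕ) : ℝ) * ((t - s) / 2 ^ k) = s + i * (2 * h) + 2 * h := by
        rw [h2]; push_cast; ring
      have e2 : s + ((2 * i : ℕ) : ℝ) * h = s + i * (2 * h) := by push_cast; ring
      have e3 : s + ((2 * i + 1 : ℕ) : ℝ) * h = s + i * (2 * h) + h := by push_cast; ring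
      have e4 : s + ((2 * i + 1 + 1 : ℕ) : ℝ) * h = s + i * (2 * h) + 2 * h := by
        push_cast; ring
      rw [← hh, e0, e1, e2, e3, e4]
    have h3 := dist_le_of_le_geometric_of_tendsto₀ q _ hq1 key h1
    have h0 : youngRiemannSum A Y (youngDyadic s t hlt 0) = A t (Y s) - A s (Y s) := by
      simp [youngRiemannSum, youngDyadic]
    rw [h0, dist_comm, dist_eq_norm] at h3
    refine h3.trans (le_of_eq ?_)
    ring
end

section
/- Let T > 0, d ≥ 1, β ∈ (1/2, 1], γ ∈ [0,1) with β(1+γ) > 1. Let A : [0,T] × ℝ^d → ℝ^d satisfy ‖A‖_{β,γ} < ∞ and M(A) := sup over s ≠ t in [0,T] and x ∈ ℝ^d of |δA_{s,t}(x)| / |t−s|^β < ∞. Then for every y_0 ∈ ℝ^d there exists a path Y : [0,T] → ℝ^d with ‖Y‖_{C^β} < ∞ and Y_0 = y_0 that solves the nonlinear Young differential equation Y_t = y_0 + ∫_0^t A_{ds}(Y_s), i.e. for every t ∈ [0,T] the Riemann sums Σ_{[u,v]∈Π} δA_{u,v}(Y_u) over partitions Π of [0,t] converge to Y_t − y_0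 as the mesh tends to 0. Moreover there is a constant C depending only on β, γ, T, ‖A‖_{β,γ} and M(A) such that sup_{t∈[0,T]} |Y_t| + ‖Y‖_{C^β} ≤ C(|y_0| + 1). -/
open Filter Topology

/-- Euler scheme along the uniform grid of step `h`. -/
noncomputable def eulerPath {E : Type*} [NormedAddCommGroup E] (A : ℝ → E → E) (y₀ : E) (h : ℝ) :
    ℕ → E
  | 0 => y₀
  | (i + 1) => eulerPath A y₀ h i +
      (A (((i + 1 : ℕ) : ℝ) * h) (eulerPath A y₀ h i) - A ((i : ℝ) * h) (eulerPath A y₀ h i))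

/-- Discrete sewing and a priori bound for the Euler scheme. -/
theorem euler_bound {E : Type*} [NormedAddCommGroup E] (A : ℝ → E → E) (y₀ : E)
    (T β γ KA MA N c h : ℝ) (n : ℕ) (hh : 0 ≤ h) (hn : (n : ℝ) * h ≤ T)
    (hβ : 0 < β) (hγ0 : 0 < γ) (hKA : 0 ≤ KA) (hN : 0 ≤ N) (hc : 0 ≤ c)
    (hc1 : 2 * (c * (1 / 2) ^ (β * (1 + γ))) + 2 * (KA * N ^ γ) ≤ c)
    (hN1 : MA + c * T ^ (β * γ) ≤ N)
    (hA1 : ∀ s ∈ Set.Icc (0 : ℝ) T, ∀ t ∈ Set.Icc (0 : ℝ) T, ∀ x y : E,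
        ‖(A t x - A s x) - (A t y - A s y)‖ ≤ KA * |t - s| ^ β * ‖x - y‖ ^ γ)
    (hA2 : ∀ s ∈ Set.Icc (0 : ℝ) T, ∀ t ∈ Set.Icc (0 : ℝ) T, ∀ x : E,
        ‖A t x - A s x‖ ≤ MA * |t - s| ^ β) (m : ℕ) :
    ∀ i, i + m ≤ n →
      ‖eulerPath A y₀ h (i + m) - eulerPath A y₀ h i‖ ≤ N * ((m : ℝ) * h) ^ β ∧
      ‖eulerPath A y₀ h (i + m) - eulerPath A y₀ h i -
        (A (((i + m : ℕ) : ℝ) * h) (eulerPath A y₀ h i) - A ((i : ℝ) * h) (eulerPath A y₀ h i))‖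
        ≤ c * ((m : ℝ) * h) ^ (β * (1 + γ)) := by
  have hmem : ∀ k : ℕ, k ≤ n → (k : ℝ) * h ∈ Set.Icc (0 : ℝ) T := by
    intro k hk
    refine ⟨by positivity, le_trans ?_ hn⟩
    have : (k : ℝ) ≤ n := by exact_mod_cast hk
    gcongr
  set y := eulerPath A y₀ h with hy
  have hstep : ∀ i, y (i + 1) = y i + (A (((i + 1 : ℕ) : ℝ) * h) (y i) - A ((i : ℝ) * h) (y i)) :=
    fun i => rfl
  have hθ : 0 < β * (1 + γ) := by positivity
  have hmix : ∀ u p q m : ℝ, 0 ≤ p → p ≤ m → 0 ≤ q → q ≤ m → 0 ≤ u → u ≤ N * q ^ β →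
      KA * p ^ β * u ^ γ ≤ KA * N ^ γ * m ^ (β * (1 + γ)) := by
    intro u p q m hp hpm hq hqm hu huq
    have hm : 0 ≤ m := hp.trans hpm
    have e : m ^ (β * (1 + γ)) = m ^ β * (m ^ β) ^ γ := by
      rw [← Real.rpow_mul hm, ← Real.rpow_add_of_nonneg hm hβ.le (by positivity)]
      ring_nf
    have h1 : u ^ γ ≤ N ^ γ * (m ^ β) ^ γ := by
      rw [← Real.mul_rpow hN (by positivity)]
      apply Real.rpow_le_rpow hu _ hγ0.le
      refine huq.trans ?_
      gcongr
    have h2 : p ^ β ≤ m ^ β := by gcongr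
    calc KA * p ^ β * u ^ γ ≤ KA * m ^ β * (N ^ γ * (m ^ β) ^ γ) := by gcongr
      _ = _ := by rw [e]; ring
  induction m using Nat.strong_induction_on with
  | _ m ih =>
  intro i hi
  have hR : ‖y (i + m) - y i - (A (((i + m : ℕ) : ℝ) * h) (y i) - A ((i : ℝ) * h) (y i))‖
        ≤ c * ((m : ℝ) * h) ^ (β * (1 + γ)) := by
    have hrhs : 0 ≤ c * ((m : ℝ) * h) ^ (β * (1 + γ)) := by positivity
    rcases Nat.lt_or_ge m 2 with hm | hm
    · have : m = 0 ∨ m = 1 := by omega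
      rcases this with rfl | rfl
      · simpa using hrhs
      · rw [hstep i]
        simpa using hrhs
    · obtain ⟨a, b, hab, ha, hb, ha2, hb2⟩ : ∃ a b : ℕ, m = a + 1 + b ∧ a + 1 < m ∧ b < m ∧
          2 * a ≤ m ∧ 2 * b ≤ m := ⟨(m - 1) / 2, m - 1 - (m - 1) / 2, by omega, by omega, by omega,
            by omega, by omega⟩
      obtain ⟨h1a, h1b⟩ := ih a (by omega) i (by omega)
      obtain ⟨h2a, -⟩ := ih (a + 1) ha i (by omega)
      obtain ⟨-, h3b⟩ := ih b hb (i + (a + 1)) (by omega)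
      have e : i + (a + 1) + b = i + m := by omega
      rw [e] at h3b
      have hs := hstep (i + a)
      rw [show i + a + 1 = i + (a + 1) by omega] at hs
      have d1 := hA1 _ (hmem (i + a) (by omega)) _ (hmem (i + (a + 1)) (by omega)) (y (i + a)) (y i)
      have d2 := hA1 _ (hmem (i + (a + 1)) (by omega)) _ (hmem (i + m) (by omega))
        (y (i + (a + 1))) (y i)
      have g1 : |((i + (a + 1) : ℕ) : ℝ) * h - ((i + a : ℕ) : ℝ) * h| = h := by
        push_cast
        rw [show ((i : ℝ) + (a + 1)) * h - (i + a) * h = h by ring, abs_of_nonneg hh]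
      have g2 : |((i + m : ℕ) : ℝ) * h - ((i + (a + 1) : ℕ) : ℝ) * h| = b * h := by
        rw [hab]; push_cast
        rw [show ((i : ℝ) + (a + 1 + b)) * h - (i + (a + 1)) * h = b * h by ring,
          abs_of_nonneg (by positivity)]
      rw [g1] at d1
      rw [g2] at d2
      have am : (a : ℝ) ≤ m := by exact_mod_cast (by omega : a ≤ m)
      have am1 : ((a + 1 : ℕ) : ℝ) ≤ m := by exact_mod_cast (by omega : a + 1 ≤ m)
      have bm : (b : ℝ) ≤ m := by exact_mod_cast (by omega : b ≤ m)
      have m1 : (1 : ℝ) ≤ m := by exact_mod_cast (by omega : 1 ≤ m)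
      have d1' := d1.trans (hmix _ h (a * h) (m * h) hh (by nlinarith) (by positivity)
        (by gcongr) (norm_nonneg _) h1a)
      have d2' := d2.trans (hmix _ (b * h) ((a + 1 : ℕ) * h) (m * h) (by positivity) (by gcongr)
        (by positivity) (by gcongr) (norm_nonneg _) h2a)
      have half : ∀ k : ℕ, 2 * k ≤ m → c * ((k : ℝ) * h) ^ (β * (1 + γ)) ≤
          c * ((1 / 2) ^ (β * (1 + γ)) * ((m : ℝ) * h) ^ (β * (1 + γ))) := by
        intro k hk
        rw [← Real.mul_rpow (by norm_num) (by positivity)]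
        have : 2 * (k : ℝ) ≤ m := by exact_mod_cast hk
        have : (k : ℝ) * h ≤ 1 / 2 * (m * h) := by nlinarith
        gcongr
      have f1 := h1b.trans (half a ha2)
      have f2 := h3b.trans (half b hb2)
      have key : y (i + m) - y i - (A (((i + m : ℕ) : ℝ) * h) (y i) - A ((i : ℝ) * h) (y i)) =
        (y (i + a) - y i - (A (((i + a : ℕ) : ℝ) * h) (y i) - A ((i : ℝ) * h) (y i))) +
        (y (i + m) - y (i + (a + 1)) - (A (((i + m : ℕ) : ℝ) * h) (y (i + (a + 1))) -
            A (((i + (a + 1) : ℕ) : ℝ) * h) (y (i + (a + 1))))) +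
        ((A (((i + (a + 1) : ℕ) : ℝ) * h) (y (i + a)) - A (((i + a : ℕ) : ℝ) * h) (y (i + a))) -
          (A (((i + (a + 1) : ℕ) : ℝ) * h) (y i) - A (((i + a : ℕ) : ℝ) * h) (y i))) +
        ((A (((i + m : ℕ) : ℝ) * h) (y (i + (a + 1))) -
          A (((i + (a + 1) : ℕ) : ℝ) * h) (y (i + (a + 1)))) -
          (A (((i + m : ℕ) : ℝ) * h) (y i) - A (((i + (a + 1) : ℕ) : ℝ) * h) (y i))) := by
        have hs' : y (i + (a + 1)) - y (i + a) - (A (((i + (a + 1) : ℕ) : ℝ) * h) (y (i + a)) -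
          A (((i + a : ℕ) : ℝ) * h) (y (i + a))) = 0 := by
          rw [sub_sub, sub_eq_zero]; exact hs
        rw [← sub_eq_zero, ← hs']
        abel
      rw [key]
      refine norm_add₄_le.trans ?_
      have hX : 0 ≤ ((m : ℝ) * h) ^ (β * (1 + γ)) := by positivity
      have := mul_le_mul_of_nonneg_right hc1 hX
      nlinarith
  refine ⟨?_, hR⟩
  have hA := hA2 _ (hmem i (by omega)) _ (hmem (i + m) hi) (y i)
  have g : |((i + m : ℕ) : ℝ) * h - (i : ℝ) * h| = m * h := by
    push_cast
    rw [show ((i : ℝ) + m) * h - i * h = m * h by ring, abs_of_nonneg (by positivity)]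
  rw [g] at hA
  have hmh := hmem m (by omega)
  have e : ((m : ℝ) * h) ^ (β * (1 + γ)) ≤ T ^ (β * γ) * ((m : ℝ) * h) ^ β := by
    rw [show β * (1 + γ) = β * γ + β by ring,
      Real.rpow_add_of_nonneg hmh.1 (by positivity) hβ.le]
    have := hmh.2
    have := hmh.1
    gcongr
  have tri : ‖y (i + m) - y i‖ ≤
    ‖y (i + m) - y i - (A (((i + m : ℕ) : ℝ) * h) (y i) - A ((i : ℝ) * h) (y i))‖ +
    ‖A (((i + m : ℕ) : ℝ) * h) (y i) - A ((i : ℝ) * h) (y i)‖ := by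
    simpa using norm_add_le (y (i + m) - y i -
      (A (((i + m : ℕ) : ℝ) * h) (y i) - A ((i : ℝ) * h) (y i)))
      (A (((i + m : ℕ) : ℝ) * h) (y i) - A ((i : ℝ) * h) (y i))
  have hX : 0 ≤ ((m : ℝ) * h) ^ β := by have := hmh.1; positivity
  have := mul_le_mul_of_nonneg_right hN1 hX
  have := mul_le_mul_of_nonneg_left e hc
  nlinarith

/-- A path whose increments are close to those of the germ is the limit of Riemann sums. -/
theorem riemann_tendsto {E : Type*} [NormedAddCommGroup E] (A : ℝ → E → E) (Y : ℝ → E)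
    (T θ c : ℝ) (hθ : 1 < θ) (hc : 0 ≤ c)
    (hY : ∀ s t, 0 ≤ s → s ≤ t → t ≤ T → ‖Y t - Y s - (A t (Y s) - A s (Y s))‖ ≤ c * (t - s) ^ θ)
    (t : ℝ) (ht : t ∈ Set.Icc (0 : ℝ) T) (P : ℕ → YoungPartition 0 t)
    (hP : Tendsto (fun k => (P k).mesh) atTop (𝓝 0)) :
    Tendsto (fun k => youngRiemannSum A Y (P k)) atTop (𝓝 (Y t - Y 0)) := by
  have hbd : ∀ k, ‖youngRiemannSum A Y (P k) - (Y t - Y 0)‖ ≤ c * (P k).mesh ^ (θ - 1) * t := by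
    intro k
    generalize P k = Q
    have hle : ∀ j, j ≤ Q.n → ∀ i, i ≤ j → Q.r i ≤ Q.r j := by
      intro j
      induction j with
      | zero => intro _ i hi; rw [Nat.le_zero.mp hi]
      | succ j ih =>
        intro hj i hi
        rcases Nat.lt_or_ge i (j + 1) with h | h
        · exact (ih (by omega) i (by omega)).trans (Q.strict j (by omega)).le
        · rw [le_antisymm hi h]
    have tel : Y t - Y 0 = ∑ i ∈ Finset.range Q.n, (Y (Q.r (i + 1)) - Y (Q.r i)) := by
      rw [Finset.sum_range_sub (fun i => Y (Q.r i)), Q.first, Q.last]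
    have tel' : t = ∑ i ∈ Finset.range Q.n, (Q.r (i + 1) - Q.r i) := by
      rw [Finset.sum_range_sub, Q.first, Q.last, sub_zero]
    have hm : ∀ i ∈ Finset.range Q.n, Q.r (i + 1) - Q.r i ≤ Q.mesh := by
      intro i hi
      have h1 := Finset.le_sup (f := fun i => (Q.r (i + 1) - Q.r i).toNNReal) hi
      exact (Real.le_coe_toNNReal _).trans (NNReal.coe_le_coe.mpr h1)
    unfold youngRiemannSum
    rw [norm_sub_rev, tel, ← Finset.sum_sub_distrib]
    refine (norm_sum_le _ _).trans ?_
    refine le_of_le_of_eq ?_ (congrArg (fun z => c * Q.mesh ^ (θ - 1) * z) tel'.symm)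
    simp only [Finset.mul_sum]
    apply Finset.sum_le_sum
    intro i hi
    have hi' := Finset.mem_range.mp hi
    have p0 : 0 ≤ Q.r i := Q.first.symm.le.trans (hle i (by omega) 0 (by omega))
    have p1 : Q.r i < Q.r (i + 1) := Q.strict i hi'
    have p2 : Q.r (i + 1) ≤ t := (hle Q.n le_rfl _ (by omega)).trans Q.last.le
    refine (hY _ _ p0 p1.le (p2.trans ht.2)).trans ?_
    have hpos : 0 < Q.r (i + 1) - Q.r i := by linarith
    have e : (Q.r (i + 1) - Q.r i) ^ θ =
        (Q.r (i + 1) - Q.r i) ^ (θ - 1) * (Q.r (i + 1) - Q.r i) := by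
      conv_lhs => rw [show θ = (θ - 1) + 1 by ring]
      rw [Real.rpow_add hpos, Real.rpow_one]
    rw [e, ← mul_assoc]
    have h1 := hm i hi
    have h2 : 0 ≤ θ - 1 := by linarith
    gcongr
  rw [tendsto_iff_norm_sub_tendsto_zero]
  refine squeeze_zero (fun _ => norm_nonneg _) hbd ?_
  have h1 : Tendsto (fun k => (P k).mesh ^ (θ - 1)) atTop (𝓝 0) := by
    have := hP.rpow_const (p := θ - 1) (Or.inr (by linarith))
    rwa [Real.zero_rpow (by linarith)] at this
  simpa using (h1.const_mul c).mul_const t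

theorem young_limit {E : Type*} [NormedAddCommGroup E] [ProperSpace E] (A : ℝ → E → E) (y₀ : E)
    (T β γ KA MA N c : ℝ) (hT : 0 < T)
    (hβ : 0 < β) (hγ0 : 0 < γ) (hKA : 0 ≤ KA) (hN : 0 ≤ N) (hc : 0 ≤ c)
    (hc1 : 2 * (c * (1 / 2) ^ (β * (1 + γ))) + 2 * (KA * N ^ γ) ≤ c)
    (hN1 : MA + c * T ^ (β * γ) ≤ N)
    (hA1 : ∀ s ∈ Set.Icc (0 : ℝ) T, ∀ t ∈ Set.Icc (0 : ℝ) T, ∀ x y : E,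
        ‖(A t x - A s x) - (A t y - A s y)‖ ≤ KA * |t - s| ^ β * ‖x - y‖ ^ γ)
    (hA2 : ∀ s ∈ Set.Icc (0 : ℝ) T, ∀ t ∈ Set.Icc (0 : ℝ) T, ∀ x : E,
        ‖A t x - A s x‖ ≤ MA * |t - s| ^ β) :
    ∃ Y : ℝ → E, Y 0 = y₀ ∧
      (∀ s t, 0 ≤ s → s ≤ t → t ≤ T → ‖Y t - Y s‖ ≤ N * (t - s) ^ β) ∧
      (∀ s t, 0 ≤ s → s ≤ t → t ≤ T →
        ‖Y t - Y s - (A t (Y s) - A s (Y s))‖ ≤ c * (t - s) ^ (β * (1 + γ))) := by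
  set h : ℕ → ℝ := fun n => T / (n + 1 : ℝ) with hh
  have hpos : ∀ n, 0 < h n := fun n => by simp only [hh]; positivity
  have hh0 : Tendsto h atTop (𝓝 0) :=
    tendsto_const_div_atTop_nhds_zero_nat T |>.comp (tendsto_add_atTop_nat 1) |>.congr
      (fun n => by simp [hh])
  set idx : ℕ → ℝ → ℕ := fun n t => ⌊t / h n⌋₊ with hidx
  set g : ℕ → ℝ → ℝ := fun n t => (idx n t : ℝ) * h n with hg
  have hnT : ∀ n, ((n + 1 : ℕ) : ℝ) * h n = T := by
    intro n; simp only [hh]; push_cast; field_simp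
  have hidxle : ∀ n t, t ≤ T → idx n t ≤ n + 1 := by
    intro n t ht
    apply Nat.floor_le_of_le
    rw [div_le_iff₀ (hpos n), hnT]
    exact ht
  have hidxmono : ∀ n s t, s ≤ t → idx n s ≤ idx n t := by
    intro n s t hst
    apply Nat.floor_le_floor
    have := (hpos n).le
    gcongr
  have hgle : ∀ n t, 0 ≤ t → g n t ≤ t := by
    intro n t ht
    have := Nat.floor_le (div_nonneg ht (hpos n).le)
    rwa [le_div_iff₀ (hpos n)] at this
  have hgge : ∀ n t, t - h n ≤ g n t := by
    intro n t
    have := (Nat.lt_floor_add_one (t / h n)).le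
    rw [div_le_iff₀ (hpos n)] at this
    simp only [hg, hidx]
    linarith
  have hg0 : ∀ n t, 0 ≤ g n t := fun n t => by
    have := (hpos n).le
    simp only [hg]; positivity
  have hgt : ∀ t, 0 ≤ t → Tendsto (fun n => g n t) atTop (𝓝 t) := by
    intro t ht
    refine tendsto_of_tendsto_of_tendsto_of_le_of_le (g := fun n => t - h n) (h := fun _ => t) ?_
      tendsto_const_nhds (fun n => hgge n t) (fun n => hgle n t ht)
    simpa using hh0.const_sub t
  set y : ℕ → ℝ → E := fun n t => eulerPath A y₀ (h n) (idx n t) with hy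
  have hb := fun n => euler_bound A y₀ T β γ KA MA N c (h n) (n + 1) (hpos n).le (hnT n).le
    hβ hγ0 hKA hN hc hc1 hN1 hA1 hA2
  have hE : ∀ n s t, 0 ≤ s → s ≤ t → t ≤ T → ‖y n t - y n s‖ ≤ N * (g n t - g n s) ^ β ∧
      ‖y n t - y n s - (A (g n t) (y n s) - A (g n s) (y n s))‖
        ≤ c * (g n t - g n s) ^ (β * (1 + γ)) := by
    intro n s t hs hst ht
    obtain ⟨m, hm⟩ := Nat.exists_eq_add_of_le (hidxmono n s t hst)
    have := hb n m (idx n s) (by rw [← hm]; exact hidxle n t ht)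
    rw [← hm] at this
    have e : (m : ℝ) * h n = g n t - g n s := by
      simp only [hg, hm]; push_cast; ring
    rw [e] at this
    exact this
  have hy0 : ∀ n, y n 0 = y₀ := by
    intro n; simp [hy, hidx, eulerPath]
  let U : Ultrafilter ℕ := Ultrafilter.of atTop
  have hU : (U : Filter ℕ) ≤ atTop := Ultrafilter.of_le _
  have hlim : ∀ t, ∃ z, t ∈ Set.Icc 0 T → Tendsto (fun n => y n t) U (𝓝 z) := by
    intro t
    by_cases ht : t ∈ Set.Icc 0 T
    · have hmemb : ∀ n, y n t ∈ Metric.closedBall y₀ (N * T ^ β) := by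
        intro n
        rw [Metric.mem_closedBall, dist_eq_norm]
        have := (hE n 0 t le_rfl ht.1 ht.2).1
        rw [hy0] at this
        refine this.trans ?_
        have h1 := hgle n t ht.1
        have h2 := hg0 n 0
        have h3 : 0 ≤ g n t - g n 0 := by
          have : g n 0 = 0 := by simp [hg, hidx]
          rw [this, sub_zero]; exact hg0 n t
        have h4 := ht.2
        have : g n t - g n 0 ≤ T := by linarith
        gcongr
      obtain ⟨z, -, hz⟩ := (isCompact_closedBall y₀ (N * T ^ β)).ultrafilter_le_nhds
        (U.map fun n => y n t) (by
          rw [le_principal_iff]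
          exact Filter.mem_map.mpr (Filter.Eventually.of_forall hmemb))
      exact ⟨z, fun _ => hz⟩
    · exact ⟨0, fun h => absurd h ht⟩
  choose Y hY using hlim
  refine ⟨Y, ?_, ?_, ?_⟩
  · have h1 := hY 0 ⟨le_rfl, hT.le⟩
    simp only [hy0] at h1
    exact (tendsto_nhds_unique h1 tendsto_const_nhds)
  · intro s t hs hst ht
    have h1 := hY t ⟨hs.trans hst, ht⟩
    have h2 := hY s ⟨hs, hst.trans ht⟩
    have h3 : Tendsto (fun n => g n t - g n s) U (𝓝 (t - s)) :=
      ((hgt t (hs.trans hst)).sub (hgt s hs)).mono_left hU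
    exact le_of_tendsto_of_tendsto' (h1.sub h2).norm
      ((h3.rpow_const (Or.inr hβ.le)).const_mul N) (fun n => (hE n s t hs hst ht).1)
  · intro s t hs hst ht
    have h1 := hY t ⟨hs.trans hst, ht⟩
    have h2 := hY s ⟨hs, hst.trans ht⟩
    have ht' := (hgt t (hs.trans hst)).mono_left hU
    have hs' := (hgt s hs).mono_left hU
    have h3 : Tendsto (fun n => g n t - g n s) U (𝓝 (t - s)) := ht'.sub hs'
    have hgerm0 : ∀ r, 0 ≤ r → r ≤ T →
        Tendsto (fun n => A (g n r) (y n s) - A r (y n s)) U (𝓝 0) := by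
      intro r hr hrT
      have hr' := (hgt r hr).mono_left hU
      have hz : Tendsto (fun n => MA * |g n r - r| ^ β) U (𝓝 0) := by
        have := (((hr'.sub_const r).abs).rpow_const (p := β) (Or.inr hβ.le)).const_mul MA
        simpa [Real.zero_rpow hβ.ne'] using this
      exact squeeze_zero_norm (fun n => hA2 r ⟨hr, hrT⟩ (g n r)
        ⟨hg0 n r, (hgle n r hr).trans hrT⟩ (y n s)) hz
    have hgerm1 : Tendsto (fun n => (A t (y n s) - A s (y n s)) - (A t (Y s) - A s (Y s))) U
        (𝓝 0) := by
      have hz : Tendsto (fun n => KA * |t - s| ^ β * ‖y n s - Y s‖ ^ γ) U (𝓝 0) := by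
        have := (((h2.sub_const (Y s)).norm).rpow_const (p := γ) (Or.inr hγ0.le)).const_mul
          (KA * |t - s| ^ β)
        simpa [Real.zero_rpow hγ0.ne'] using this
      exact squeeze_zero_norm (fun n => hA1 s ⟨hs, hst.trans ht⟩ t ⟨hs.trans hst, ht⟩ _ _) hz
    have hgerm : Tendsto (fun n => A (g n t) (y n s) - A (g n s) (y n s)) U
        (𝓝 (A t (Y s) - A s (Y s))) := by
      have := (((hgerm0 t (hs.trans hst) ht).sub (hgerm0 s hs (hst.trans ht))).add
        hgerm1).add_const (A t (Y s) - A s (Y s))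
      simp only [sub_zero, add_zero, zero_add] at this
      refine this.congr (fun n => ?_)
      abel
    have hθ : 0 ≤ β * (1 + γ) := by positivity
    exact le_of_tendsto_of_tendsto' ((h1.sub h2).sub hgerm).norm
      ((h3.rpow_const (Or.inr hθ)).const_mul c) (fun n => (hE n s t hs hst ht).2)

/-- **Existence for the nonlinear Young differential equation** `Y_t = y₀ + ∫_0^t A_{ds}(Y_s)`
in `ℝ^d`.  Let `β ∈ (1/2,1]`, `γ ∈ [0,1)` with `β(1+γ) > 1`.  There is a constant `C`,
depending only on `β, γ, T` and the bounds `KA ≥ ‖A‖_{β,γ}`, `MA ≥ M(A)`, such that for every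
field `A` satisfying these bounds and every initial datum `y₀` there is a `β`-Hölder path `Y`
with `Y 0 = y₀` solving the equation (the Riemann sums over partitions of `[0,t]` converge to
`Y_t − y₀` as the mesh tends to `0`) and satisfying
`sup_{[0,T]} |Y| + ‖Y‖_{C^β} ≤ C (|y₀| + 1)`. -/
theorem youngODE_exists
    (d : ℕ) (hd : 1 ≤ d) (T β γ KA MA : ℝ) (hT : 0 < T)
    (hβ : 1 / 2 < β) (hβ1 : β ≤ 1) (hγ0 : 0 ≤ γ) (hγ1 : γ < 1)
    (hβγ : 1 < β * (1 + γ)) (hKA : 0 ≤ KA) (hMA : 0 ≤ MA) :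
    ∃ C : ℝ,
      ∀ A : ℝ → EuclideanSpace ℝ (Fin d) → EuclideanSpace ℝ (Fin d),
      (∀ s ∈ Set.Icc (0 : ℝ) T, ∀ t ∈ Set.Icc (0 : ℝ) T, ∀ x y : EuclideanSpace ℝ (Fin d),
        ‖(A t x - A s x) - (A t y - A s y)‖ ≤ KA * |t - s| ^ β * ‖x - y‖ ^ γ) →
      (∀ s ∈ Set.Icc (0 : ℝ) T, ∀ t ∈ Set.Icc (0 : ℝ) T, ∀ x : EuclideanSpace ℝ (Fin d),
        ‖A t x - A s x‖ ≤ MA * |t - s| ^ β) →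
      ∀ y₀ : EuclideanSpace ℝ (Fin d),
      ∃ (Y : ℝ → EuclideanSpace ℝ (Fin d)) (KY : ℝ),
        Y 0 = y₀ ∧
        (∀ s ∈ Set.Icc (0 : ℝ) T, ∀ t ∈ Set.Icc (0 : ℝ) T, ‖Y t - Y s‖ ≤ KY * |t - s| ^ β) ∧
        (∀ t ∈ Set.Icc (0 : ℝ) T, ∀ P : ℕ → YoungPartition 0 t,
          Tendsto (fun k => (P k).mesh) atTop (𝓝 0) →
          Tendsto (fun k => youngRiemannSum A Y (P k)) atTop (𝓝 (Y t - y₀))) ∧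
        (∀ t ∈ Set.Icc (0 : ℝ) T, ‖Y t‖ + KY ≤ C * (‖y₀‖ + 1)) := by
  have hγ : 0 < γ := by nlinarith
  have hβ0 : 0 < β := by linarith
  have hθ : 1 < β * (1 + γ) := hβγ
  have hq : (1 / 2 : ℝ) ^ (β * (1 + γ)) < 1 / 2 := by
    conv_rhs => rw [← Real.rpow_one (1 / 2 : ℝ)]
    exact Real.rpow_lt_rpow_of_exponent_gt (by norm_num) (by norm_num) hθ
  set q := (1 / 2 : ℝ) ^ (β * (1 + γ)) with hqdef
  have hq' : 0 < 1 - 2 * q := by linarith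
  set c1 := 2 * KA / (1 - 2 * q) * T ^ (β * γ) with hc1
  have hc10 : 0 ≤ c1 := by positivity
  set L := MA + c1 + 1 with hL
  have hL1 : 1 ≤ L := by linarith
  set N := L ^ (1 / (1 - γ)) with hN
  have h1γ : 0 < 1 - γ := by linarith
  have hN1 : 1 ≤ N := Real.one_le_rpow hL1 (by positivity)
  have hN0 : 0 < N := by linarith
  have hNL : N ^ (1 - γ) = L := by
    rw [hN, ← Real.rpow_mul (by linarith), one_div, inv_mul_cancel₀ h1γ.ne', Real.rpow_one]
  have hNγ1 : 1 ≤ N ^ γ := Real.one_le_rpow hN1 hγ0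
  have hNN : N = L * N ^ γ := by
    rw [← hNL, ← Real.rpow_add hN0]; simp
  set c := 2 * (KA * N ^ γ) / (1 - 2 * q) with hc
  have hc0 : 0 ≤ c := by positivity
  have hce : c * (1 - 2 * q) = 2 * (KA * N ^ γ) := by rw [hc]; field_simp
  have hcT : c * T ^ (β * γ) = c1 * N ^ γ := by rw [hc, hc1]; ring
  refine ⟨N * T ^ β + N + 1, fun A hA1 hA2 y₀ => ?_⟩
  obtain ⟨Y, hY0, hYN, hYc⟩ := young_limit A y₀ T β γ KA MA N c hT hβ0 hγ hKA hN0.le hc0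
    (by linarith) (by rw [hcT]; nlinarith) hA1 hA2
  have hTβ : 0 ≤ T ^ β := by positivity
  refine ⟨Y, N, hY0, ?_, ?_, ?_⟩
  · intro s hs t ht
    rcases le_total s t with h | h
    · rw [abs_of_nonneg (by linarith)]
      exact hYN s t hs.1 h ht.2
    · rw [abs_sub_comm, norm_sub_rev, abs_of_nonneg (by linarith)]
      exact hYN t s ht.1 h hs.2
  · intro t ht P hP
    rw [← hY0]
    exact riemann_tendsto A Y T _ c hθ hc0 hYc t ht P hP
  · intro t ht
    have h1 := hYN 0 t le_rfl ht.1 ht.2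
    rw [hY0, sub_zero] at h1
    have h2 : N * t ^ β ≤ N * T ^ β := by
      have := ht.1
      have := ht.2
      gcongr
    have h3 : ‖Y t‖ ≤ ‖Y t - y₀‖ + ‖y₀‖ := by simpa using norm_add_le (Y t - y₀) y₀
    have h4 := norm_nonneg y₀
    have h5 : 0 ≤ N * T ^ β + N := by positivity
    nlinarith [mul_nonneg h5 h4]
end

section
/- Let H ∈ (0,1) and T > 0. For N ∈ ℕ, N ≥ 1, set t_i := iT/N for i = 0, …, N, and define S_N := Σ_{i=0}^{N−1} ∫_{t_i}^{t_{i+1}} ( | ∫_{t_{i+1}}^T ( (s−u)^{H−1/2} − (s−t_i)^{H−1/2} ) ds |² + | ∫_{t_i}^{t_{i+1}} (s−t_i)^{H−1/2} ds |² ) du. Then lim_{N→∞} S_N = 0. -/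
open Filter Topology

lemma kernel_integral (r b c u : ℝ) (hr : -1 < r) :
    ∫ s in b..c, (s - u) ^ r = ((c - u) ^ (r + 1) - (b - u) ^ (r + 1)) / (r + 1) := by
  rw [intervalIntegral.integral_comp_sub_right (fun x => x ^ r) u, integral_rpow (Or.inl hr)]

lemma kernel_integrable (r b c u : ℝ) (hr : -1 < r) :
    IntervalIntegrable (fun s => (s - u) ^ r) MeasureTheory.volume b c := by
  have h := (intervalIntegral.intervalIntegrable_rpow' (a := b - u) (b := c - u) hr).comp_sub_right u
  simpa using h

lemma kernel_unif (p T e : ℝ) (hp : 0 < p) (he : 0 < e) :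
    ∃ d > 0, ∀ x ∈ Set.Icc 0 T, ∀ y ∈ Set.Icc 0 T, |x - y| < d → |x ^ p - y ^ p| < e := by
  have hc : ContinuousOn (fun x : ℝ => x ^ p) (Set.Icc 0 T) :=
    (Real.continuous_rpow_const hp.le).continuousOn
  have hu := isCompact_Icc.uniformContinuousOn_of_continuous hc
  rw [Metric.uniformContinuousOn_iff] at hu
  obtain ⟨d, hd, h⟩ := hu e he
  exact ⟨d, hd, fun x hx y hy hxy => h x hx y hy hxy⟩

lemma kernel_step (r T e d a b : ℝ) (hr : -1 < r)
    (hd : ∀ x ∈ Set.Icc 0 T, ∀ y ∈ Set.Icc 0 T, |x - y| < d → |x ^ (r + 1) - y ^ (r + 1)| < e)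
    (ha : 0 ≤ a) (hab : a ≤ b) (hb : b ≤ T) (hh : b - a < d) :
    ‖∫ u in a..b, (|∫ s in b..T, ((s - u) ^ r - (s - a) ^ r)| ^ 2 +
      |∫ s in a..b, (s - a) ^ r| ^ 2)‖ ≤ 5 * (e / (r + 1)) ^ 2 * (b - a) := by
  have hp : 0 < r + 1 := by linarith
  rw [← abs_of_nonneg (sub_nonneg.2 hab)]
  apply intervalIntegral.norm_integral_le_of_norm_le_const
  intro u hu
  rw [Set.uIoc_of_le hab] at hu
  obtain ⟨hu1, hu2⟩ := hu
  rw [intervalIntegral.integral_sub (kernel_integrable r b T u hr) (kernel_integrable r b T a hr),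
    kernel_integral r b T u hr, kernel_integral r b T a hr, kernel_integral r a b a hr]
  have h1 := hd (T - u) ⟨by linarith, by linarith⟩ (T - a) ⟨by linarith, by linarith⟩
    (by rw [abs_lt]; constructor <;> linarith)
  have h2 := hd (b - u) ⟨by linarith, by linarith⟩ (b - a) ⟨by linarith, by linarith⟩
    (by rw [abs_lt]; constructor <;> linarith)
  have h3 := hd (b - a) ⟨by linarith, by linarith⟩ (a - a) ⟨by linarith, by linarith⟩
    (by rw [abs_lt]; constructor <;> linarith)
  rw [abs_lt] at h1 h2
  have k1 : |((T - u) ^ (r + 1) - (b - u) ^ (r + 1)) / (r + 1) -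
      ((T - a) ^ (r + 1) - (b - a) ^ (r + 1)) / (r + 1)| ≤ 2 * (e / (r + 1)) := by
    rw [← sub_div, abs_div, abs_of_pos hp, ← mul_div_assoc]
    apply div_le_div_of_nonneg_right _ hp.le
    rw [abs_le]; constructor <;> linarith
  have k2 : |((b - a) ^ (r + 1) - (a - a) ^ (r + 1)) / (r + 1)| ≤ e / (r + 1) := by
    rw [abs_div, abs_of_pos hp]
    exact div_le_div_of_nonneg_right h3.le hp.le
  have l1 := pow_le_pow_left₀ (abs_nonneg _) k1 2
  have l2 := pow_le_pow_left₀ (abs_nonneg _) k2 2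
  rw [Real.norm_of_nonneg (by positivity)]
  linarith

/-- **Vanishing of the Riemann-sum error for the fractional Volterra kernel.**  For
`H ∈ (0,1)`, `T > 0` and the uniform grid `t_i = iT/N`, the quantity
`S_N = Σ_{i<N} ∫_{t_i}^{t_{i+1}} ( |∫_{t_{i+1}}^T ((s−u)^{H−1/2} − (s−t_i)^{H−1/2}) ds|²
 + |∫_{t_i}^{t_{i+1}} (s−t_i)^{H−1/2} ds|² ) du` tends to `0` as `N → ∞`. -/
theorem fractional_kernel_riemann_error_tendsto_zero
    (H T : ℝ) (hH0 : 0 < H) (hH1 : H < 1) (hT : 0 < T) :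
    Tendsto (fun N : ℕ =>
      ∑ i ∈ Finset.range N,
        ∫ u in ((i : ℝ) * T / N)..(((i : ℝ) + 1) * T / N),
          (|∫ s in (((i : ℝ) + 1) * T / N)..T,
              ((s - u) ^ (H - 1 / 2) - (s - (i : ℝ) * T / N) ^ (H - 1 / 2))| ^ 2 +
           |∫ s in ((i : ℝ) * T / N)..(((i : ℝ) + 1) * T / N),
              (s - (i : ℝ) * T / N) ^ (H - 1 / 2)| ^ 2))
      atTop (𝓝 0) := by
  have hr : -1 < H - 1 / 2 := by linarith
  have hp : 0 < H - 1 / 2 + 1 := by linarith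
  rw [Metric.tendsto_atTop]
  intro ε hε
  set p := H - 1 / 2 + 1 with hpdef
  obtain ⟨e, he, hee⟩ : ∃ e > 0, 5 * (e / p) ^ 2 * T < ε := by
    refine ⟨p * Real.sqrt (ε / (10 * T)), by positivity, ?_⟩
    rw [mul_div_cancel_left₀ _ hp.ne', Real.sq_sqrt (by positivity)]
    have : 5 * (ε / (10 * T)) * T = ε / 2 := by field_simp; norm_num
    linarith
  obtain ⟨d, hd, hunif⟩ := kernel_unif p T e hp he
  obtain ⟨M, hM⟩ := exists_nat_gt (T / d)
  refine ⟨M + 1, fun N hN => ?_⟩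
  have hN0 : (0 : ℝ) < N := by exact_mod_cast (by omega : 0 < N)
  have hMN : (M : ℝ) ≤ N := by exact_mod_cast (by omega : M ≤ N)
  have hTN : T / N < d := by
    rw [div_lt_iff₀ hd] at hM
    rw [div_lt_iff₀ hN0]
    nlinarith
  rw [dist_zero_right]
  refine lt_of_le_of_lt (norm_sum_le_of_le (Finset.range N)
    (n := fun _ => 5 * (e / p) ^ 2 * (T / N)) ?_) ?_
  · intro i hi
    have hi' : (i : ℝ) + 1 ≤ N := by exact_mod_cast Finset.mem_range.1 hi
    have hdiff : ((i : ℝ) + 1) * T / N - (i : ℝ) * T / N = T / N := by ring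
    have hpos : 0 < T / N := by positivity
    rw [← hdiff]
    refine kernel_step (H - 1 / 2) T e d _ _ hr hunif (by positivity) (by linarith) ?_ (by linarith)
    rw [div_le_iff₀ hN0]
    nlinarith
  · rw [Finset.sum_const, Finset.card_range, nsmul_eq_mul]
    have : (N : ℝ) * (5 * (e / p) ^ 2 * (T / N)) = 5 * (e / p) ^ 2 * T := by
      field_simp
    linarith
end
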